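/- Let (a_i)_{i≥1} be a π-periodic sequence of real numbers, let A > 0 be an upper bound of the numbers |a_i|, and fix real numbers −A < c1 < c2 < A with θ = (c2 − c1)/(A − c1). Suppose {1,…,π} is partitioned as I0 ∪ J0 ∪ K0 with I0 ∪ K0 nonempty, such that a_i ≥ c2 for every i ∈ J0. Let I, J, K denote the sets of positive integers whose representative modulo π in {1,…,π} lies in I0, J0, K0 respectively. Let (b_j)_{j≥1} be the J-reduced sequence of (a_i) with renumbering i(j) (so i(j) is the j-th smallest element of I ∪ K and b_j = a_{i(j)}), and define d_j = b_j if i(j) ∈ I and d_j = −A if i(j) ∈ K. If (1/card(I0 ∪ K0))·Σ_{j : i(j) ∈ I0 ∪ K0} d_j ≥ c2, then the number of indices i ∈ I0 that are ultimate c1-Pliss times for (a_i) is at least θ·card(I0 ∪ K0). -/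

import Mathlib

/-- `m ≥ 1` is a `c`-Pliss time for the sequence `a` (indexed from `1`):
`∑_{i=k+1}^{m} a i ≥ c·(m-k)` for every `k = 0, 1, …, m-1`. -/
def PlissTime (a : ℕ → ℝ) (c : ℝ) (m : ℕ) : Prop :=
  1 ≤ m ∧ ∀ k < m, c * ((m : ℝ) - (k : ℝ)) ≤ ∑ i ∈ Finset.Icc (k + 1) m, a i

/-- The representative of a positive integer `i` modulo `π` lying in `{1, …, π}`. -/
def repMod (π i : ℕ) : ℕ := (i - 1) % π + 1

/-- The set of positive integers whose representative modulo `π` in `{1,…,π}` belongs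
to the finite set `S`. -/
def modSet (π : ℕ) (S : Finset ℕ) : Set ℕ := {i | 1 ≤ i ∧ repMod π i ∈ S}

/-- For a set `T` of positive integers, `reduceIdx T j` is the `j`-th smallest element of `T`
(for `j ≥ 1`); this is the renumbering giving the reduced sequence `b j = a (reduceIdx T j)`. -/
noncomputable def reduceIdx (T : Set ℕ) (j : ℕ) : ℕ := Nat.nth (· ∈ T) (j - 1)

/-- Running maximum of a sequence. -/
noncomputable def runMax (E : ℕ → ℝ) : ℕ → ℝ
  | 0 => E 0
  | m + 1 => max (runMax E m) (E (m + 1))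

lemma le_runMax (E : ℕ → ℝ) (m k : ℕ) (h : k ≤ m) : E k ≤ runMax E m := by
  induction m with
  | zero => obtain rfl : k = 0 := by omega
            exact le_refl _
  | succ m ih =>
    rcases Nat.lt_or_ge m k with h1 | h1
    · obtain rfl : k = m + 1 := by omega
      exact le_max_right _ _
    · exact (ih h1).trans (le_max_left _ _)

lemma exists_runMax (E : ℕ → ℝ) (m : ℕ) : ∃ k ≤ m, runMax E m = E k := by
  induction m with
  | zero => exact ⟨0, le_refl _, rfl⟩
  | succ m ih =>
    obtain ⟨k, hk, h⟩ := ih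
    rcases max_choice (runMax E m) (E (m + 1)) with h1 | h1
    · exact ⟨k, by omega, by rw [← h, ← h1]; rfl⟩
    · exact ⟨m + 1, le_refl _, h1⟩

lemma runMax_step (E : ℕ → ℝ) (p : ℕ) (S : ℝ) (hE : ∀ k, E (k + p) = E k + S) :
    S ≤ runMax E (p + p) - runMax E p := by
  obtain ⟨k, hk, h⟩ := exists_runMax E p
  have := le_runMax E (p + p) (k + p) (by omega)
  rw [hE] at this
  linarith

lemma record_all (E : ℕ → ℝ) (p : ℕ) (hp : 1 ≤ p) (S : ℝ) (hS : 0 ≤ S)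
    (hE : ∀ k, E (k + p) = E k + S) (i : ℕ)
    (hr : ∀ k < i + p, E k ≤ E (i + p)) (n : ℕ) :
    ∀ k < i + n * p, E k ≤ E (i + n * p) := by
  have h0 : ∀ n : ℕ, ∀ k, E (k + n * p) = E k + n * S := by
    intro n
    induction n with
    | zero => intro k; simp
    | succ n ih =>
      intro k
      have : k + (n + 1) * p = (k + n * p) + p := by ring
      rw [this, hE, ih]; push_cast; ring
  have hi : ∀ k < i, E k ≤ E i := by
    intro k hk
    have := hr (k + p) (by omega)
    rw [hE, hE] at this
    linarith
  induction n with
  | zero => simpa using hi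
  | succ n ih =>
    intro k hk
    have e1 : i + (n + 1) * p = (i + n * p) + p := by ring
    rw [e1] at hk ⊢
    rcases Nat.lt_or_ge k (i + n * p) with h | h
    · have := ih k h
      rw [hE]; linarith
    · have e2 : k = (k - n * p) + n * p := by
        have : n * p ≤ k := by omega
        omega
      have := hr (k - n * p) (by omega)
      have e3 : i + n * p + p = (i + p) + n * p := by ring
      rw [e2, e3, h0, h0]
      linarith

lemma sum_reduce (π : ℕ) (hπ : 1 ≤ π) (S : Finset ℕ) (hS : S ⊆ Finset.Icc 1 π)
    (hne : S.Nonempty) (g : ℕ → ℝ) :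
    ∑ j ∈ Finset.Icc 1 S.card, g (reduceIdx (modSet π S) j) = ∑ i ∈ S, g i := by
  classical
  set p : ℕ → Prop := fun i => i ∈ modSet π S with hp
  have hrep : ∀ i, 1 ≤ i → i ≤ π → repMod π i = i := by
    intro i h1 h2
    unfold repMod
    rw [Nat.mod_eq_of_lt (by omega)]; omega
  have hpS : ∀ i, i < π + 1 → (p i ↔ i ∈ S) := by
    intro i hi
    constructor
    · rintro ⟨h1, h2⟩
      rwa [hrep i h1 (by omega)] at h2
    · intro h
      have := Finset.mem_Icc.1 (hS h)
      exact ⟨this.1, by rwa [hrep i this.1 this.2]⟩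
  have hcount : Nat.count p (π + 1) = S.card := by
    rw [Nat.count_eq_card_filter_range]
    congr 1
    ext i
    simp only [Finset.mem_filter, Finset.mem_range]
    constructor
    · rintro ⟨h1, h2⟩; exact (hpS i h1).1 h2
    · intro h
      have := Finset.mem_Icc.1 (hS h)
      exact ⟨by omega, (hpS i (by omega)).2 h⟩
  have hinf : (Set.ofPred p).Infinite := by
    obtain ⟨s, hs⟩ := hne
    have hs1 := Finset.mem_Icc.1 (hS hs)
    refine Set.infinite_of_injective_forall_mem (f := fun n : ℕ => s + n * π) ?_ ?_
    · intro x y h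
      simp only [Nat.add_left_cancel_iff] at h
      exact Nat.eq_of_mul_eq_mul_right (by omega) h
    · intro n
      refine ⟨by show 1 ≤ s + n * π; omega, ?_⟩
      have : repMod π (s + n * π) = s := by
        unfold repMod
        have : s + n * π - 1 = (s - 1) + n * π := by omega
        rw [this, Nat.add_mul_mod_self_right, Nat.mod_eq_of_lt (by omega)]; omega
      rwa [this]
  refine Finset.sum_nbij (fun j => reduceIdx (modSet π S) j) ?_ ?_ ?_ (fun _ _ => rfl)
  · intro j hj
    have hj := Finset.mem_Icc.1 hj
    have : Nat.nth p (j - 1) < π + 1 := Nat.nth_lt_of_lt_count (by rw [hcount]; omega)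
    exact (hpS _ this).1 (Nat.nth_mem_of_infinite hinf _)
  · intro x hx y hy h
    have hx := Finset.mem_Icc.1 hx
    have hy := Finset.mem_Icc.1 hy
    have := Nat.nth_injective hinf h
    omega
  · intro i hi
    have hi' : i ∈ S := hi
    have h1 := Finset.mem_Icc.1 (hS hi')
    have hpi : p i := (hpS i (by omega)).2 hi'
    refine ⟨Nat.count p i + 1, ?_, ?_⟩
    · have := Nat.count_strict_mono (n := π + 1) hpi (by omega)
      rw [hcount] at this
      simp only [Finset.coe_Icc, Set.mem_Icc]
      omega
    · exact Nat.nth_count hpi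


/-- Let `a` be a `π`-periodic sequence, `A > 0` an upper bound for `|a i|`, and
`-A < c1 < c2 < A`, `θ = (c2-c1)/(A-c1)`. Partition `{1,…,π} = I0 ∪ J0 ∪ K0` with
`I0 ∪ K0 ≠ ∅` and `a i ≥ c2` on `J0`; let `I`, `J`, `K` be the positive integers whose
representative mod `π` lies in `I0`, `J0`, `K0` respectively. Let `b j = a (i(j))` be the
`J`-reduced sequence (`i(j)` the `j`-th smallest element of `I ∪ K`) and let `d j = b j` if
`i(j) ∈ I`, `d j = -A` if `i(j) ∈ K`. If the average of `d j` over the indices `j` with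
`i(j) ∈ I0 ∪ K0` (i.e. `j ∈ {1, …, card (I0 ∪ K0)}`) is at least `c2`, then at least
`θ·card (I0 ∪ K0)` many indices `i ∈ I0` are ultimate `c1`-Pliss times for `a`. -/
theorem localized_pliss_periodic (π : ℕ) (hπ : 1 ≤ π) (a : ℕ → ℝ) (A c1 c2 : ℝ)
    (hA : 0 < A) (haA : ∀ i, 1 ≤ i → |a i| ≤ A)
    (hc1 : -A < c1) (hc12 : c1 < c2) (hc2A : c2 < A)
    (hper : ∀ i, 1 ≤ i → a (i + π) = a i)
    (I0 J0 K0 : Finset ℕ)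
    (hIJ : Disjoint I0 J0) (hIK : Disjoint I0 K0) (hJK : Disjoint J0 K0)
    (hunion : I0 ∪ J0 ∪ K0 = Finset.Icc 1 π)
    (hne : (I0 ∪ K0).Nonempty)
    (hJ0 : ∀ i ∈ J0, c2 ≤ a i)
    (hsum : c2 * ((I0 ∪ K0).card : ℝ) ≤
      ∑ j ∈ Finset.Icc 1 (I0 ∪ K0).card,
        (if repMod π (reduceIdx (modSet π (I0 ∪ K0)) j) ∈ I0
          then a (reduceIdx (modSet π (I0 ∪ K0)) j) else -A)) :
    ((c2 - c1) / (A - c1)) * ((I0 ∪ K0).card : ℝ) ≤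
      (({i | i ∈ I0 ∧ ∀ n : ℕ, PlissTime a c1 (i + n * π)} : Set ℕ).ncard : ℝ) := by
  classical
  have hI1 : ∀ i ∈ I0, 1 ≤ i ∧ i ≤ π := fun i hi =>
    Finset.mem_Icc.1 (hunion ▸ (by simp [hi] : i ∈ I0 ∪ J0 ∪ K0))
  have hsub : I0 ∪ K0 ⊆ Finset.Icc 1 π := by
    rw [← hunion]; intro i; simp only [Finset.mem_union]; tauto
  have hrep : ∀ i, 1 ≤ i → i ≤ π → repMod π i = i := by
    intro i h1 h2
    unfold repMod
    rw [Nat.mod_eq_of_lt (by omega)]; omega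
  rw [sum_reduce π hπ (I0 ∪ K0) hsub hne (fun i => if repMod π i ∈ I0 then a i else -A)] at hsum
  -- the modified sequence, indexed from zero
  set f : ℕ → ℝ := fun i => if i % π + 1 ∈ I0 then a (i % π + 1) - c1 else
    if i % π + 1 ∈ K0 then -A - c1 else 0 with hf
  have hfper : ∀ i, f (i + π) = f i := by intro i; simp [hf]
  have hamod : ∀ i, a (i % π + 1) = a (i + 1) := by
    have : Function.Periodic (fun i => a (i + 1)) π := by
      intro i
      have := hper (i + 1) (by omega)
      simp only []
      rw [← this]; congr 1; ring
    intro i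
    exact this.map_mod_nat i
  have hfa : ∀ i, f i ≤ a (i + 1) - c1 := by
    intro i
    have h1 := abs_le.1 (haA (i + 1) (by omega))
    simp only [hf]
    split_ifs with h2 h3
    · rw [hamod]
    · linarith
    · have h4 : i % π + 1 ∈ I0 ∪ J0 ∪ K0 := by
        rw [hunion, Finset.mem_Icc]
        have := Nat.mod_lt i (show π > 0 by omega)
        omega
      simp only [Finset.mem_union] at h4
      have h5 := hJ0 (i % π + 1) (by tauto)
      rw [hamod] at h5
      linarith
  set E : ℕ → ℝ := fun m => ∑ i ∈ Finset.range m, f i with hEdef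
  have hEs : ∀ m, E (m + 1) = E m + f m := fun m => Finset.sum_range_succ _ _
  have hE : ∀ k, E (k + π) = E k + E π := by
    intro k
    induction k with
    | zero => simp [hEdef]
    | succ k ih =>
      have : k + 1 + π = (k + π) + 1 := by ring
      rw [this, hEs, hEs, ih, hfper]; ring
  have hSlow : (c2 - c1) * ((I0 ∪ K0).card : ℝ) ≤ E π := by
    have h1 : E π = ∑ i ∈ I0 ∪ K0, ((if repMod π i ∈ I0 then a i else -A) - c1) := by
      have h2 : E π = ∑ i ∈ Finset.Icc 1 π, f (i - 1) := by
        rw [hEdef]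
        simp only []
        rw [Finset.range_eq_Ico, Finset.sum_Ico_eq_sum_range, ← Finset.Ico_add_one_right_eq_Icc,
          Finset.sum_Ico_eq_sum_range]
        simp
      rw [h2, ← Finset.sum_subset hsub]
      · refine Finset.sum_congr rfl fun i hi => ?_
        have h3 := Finset.mem_Icc.1 (hsub hi)
        rw [hrep i h3.1 h3.2]
        have h4 : (i - 1) % π + 1 = i := hrep i h3.1 h3.2
        simp only [hf, h4]
        simp only [Finset.mem_union] at hi
        split_ifs with h5 h6
        · rfl
        · rfl
        · tauto
      · intro i hi hn
        have h3 := Finset.mem_Icc.1 hi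
        have h4 : (i - 1) % π + 1 = i := hrep i h3.1 h3.2
        simp only [Finset.mem_union, not_or] at hn
        simp only [hf, h4, hn.1, hn.2, if_false]
    rw [h1, Finset.sum_sub_distrib, Finset.sum_const, nsmul_eq_mul]
    linarith
  have hS0 : 0 ≤ E π := le_trans (mul_nonneg (by linarith) (Nat.cast_nonneg _)) hSlow
  -- set of good times
  set G : Finset ℕ := I0.filter (fun i => ∀ n : ℕ, PlissTime a c1 (i + n * π)) with hG
  have hGc : ({i | i ∈ I0 ∧ ∀ n : ℕ, PlissTime a c1 (i + n * π)} : Set ℕ).ncard = G.card := by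
    rw [← Set.ncard_coe_finset]
    congr 1
    ext i; simp [hG]
  rw [hGc]
  have hpl : ∀ i, 1 ≤ i → (∀ k < i + π, E k ≤ E (i + π)) → ∀ n, PlissTime a c1 (i + n * π) := by
    intro i hi hr n
    refine ⟨by omega, ?_⟩
    intro k hk
    have h1 := record_all E π hπ (E π) hS0 hE i hr n k hk
    generalize i + n * π = m at hk h1
    have h2 : E m - E k = ∑ j ∈ Finset.Ico k m, f j := (Finset.sum_Ico_eq_sub _ hk.le).symm
    have h3 : ∑ j ∈ Finset.Icc (k + 1) m, a j = ∑ j ∈ Finset.Ico k m, a (j + 1) := by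
      rw [← Finset.Ico_add_one_right_eq_Icc, Finset.sum_Ico_add' a k m 1]
    have h4 : ∑ j ∈ Finset.Ico k m, f j ≤ ∑ j ∈ Finset.Ico k m, (a (j + 1) - c1) :=
      Finset.sum_le_sum fun j _ => hfa j
    rw [Finset.sum_sub_distrib, Finset.sum_const, nsmul_eq_mul, Nat.card_Ico,
      Nat.cast_sub hk.le] at h4
    rw [h3]; linarith
  have hstep : ∀ i ∈ Finset.range π, runMax E (π + (i + 1)) - runMax E (π + i) ≤
      if i + 1 ∈ G then A - c1 else 0 := by
    intro i hi
    have hi := Finset.mem_range.1 hi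
    have hfi : f (π + i) = f i := by rw [add_comm, hfper]
    have hr : runMax E (π + (i + 1)) = max (runMax E (π + i)) (E (π + i + 1)) := rfl
    have h1 := hEs (π + i)
    have h2 := le_runMax E (π + i) (π + i) le_rfl
    have h3 := abs_le.1 (haA (i + 1) (by omega))
    have h4 := hfa i
    rw [hr]
    by_cases hrec : runMax E (π + i) < E (π + i + 1)
    · rw [max_eq_right hrec.le]
      have hpos : 0 < f i := by linarith
      have hI : i + 1 ∈ I0 := by
        by_contra hn
        simp only [hf, Nat.mod_eq_of_lt hi, hn, if_false] at hpos
        split_ifs at hpos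
        · linarith
        · linarith
      have hGi : i + 1 ∈ G := by
        refine Finset.mem_filter.2 ⟨hI, hpl (i + 1) (by omega) ?_⟩
        intro k hk
        have e : i + 1 + π = π + i + 1 := by ring
        rw [e]
        exact (le_runMax E (π + i) k (by omega)).trans hrec.le
      rw [if_pos hGi]
      linarith
    · rw [max_eq_left (not_lt.1 hrec), sub_self]
      split_ifs
      · linarith
      · exact le_rfl
  have hsumM := Finset.sum_le_sum hstep
  rw [Finset.sum_range_sub (fun i => runMax E (π + i))] at hsumM
  have hMS := runMax_step E π (E π) hE
  have hcard : ∑ i ∈ Finset.range π, (if i + 1 ∈ G then A - c1 else 0) ≤ (A - c1) * G.card := by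
    rw [← Finset.sum_filter, Finset.sum_const, nsmul_eq_mul, mul_comm]
    refine mul_le_mul_of_nonneg_left ?_ (by linarith)
    exact_mod_cast Finset.card_le_card_of_injOn (fun i => i + 1)
      (fun i hi => (Finset.mem_filter.1 hi).2) (fun x _ y _ h => Nat.succ_injective h)
  simp only [add_zero] at hsumM
  rw [div_mul_eq_mul_div, div_le_iff₀ (by linarith)]
  linarith
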